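/- Verma relation between e0 and e1 (case a01 = a10 = -1 of the geometric crystal axioms in Theorem 5.3): for all c1, c2, x0,...,x5 ∈ ℝ_{>0} one has e0^{c1}(e1^{c1c2}(e0^{c2}(x))) = e1^{c2}(e0^{c1c2}(e1^{c1}(x))). -/

import Mathlib

noncomputable section

/-- the action `e1^c` on `(x0,...,x5)` -/
def e1act (c : ℝ) (x : Fin 6 → ℝ) : Fin 6 → ℝ :=
  let x0 := x 0; let x1 := x 1; let x2 := x 2; let x3 := x 3; let x4 := x 4; let x5 := x 5
  let A1 := x0/x1 + x0*x2^3/(x1^2*x3) + x0*x2^3*x4^3/(x1^2*x3^2*x5)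
  let B1 := c*x0/x1 + x0*x2^3/(x1^2*x3) + x0*x2^3*x4^3/(x1^2*x3^2*x5)
  let B3 := c*x0/x1 + c*x0*x2^3/(x1^2*x3) + x0*x2^3*x4^3/(x1^2*x3^2*x5)
  ![x0, (B1/A1)*x1, x2, (B3/B1)*x3, x4, (c*A1/B3)*x5]

/-- the action `e2^c` on `(x0,...,x5)` -/
def e2act (c : ℝ) (x : Fin 6 → ℝ) : Fin 6 → ℝ :=
  let x0 := x 0; let x1 := x 1; let x2 := x 2; let x3 := x 3; let x4 := x 4; let x5 := x 5
  let A2 := x1/x2 + x1*x3/(x2^2*x4)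
  let B2 := c*x1/x2 + x1*x3/(x2^2*x4)
  ![x0, x1, (B2/A2)*x2, x3, (c*A2/B2)*x4, x5]

end

noncomputable section

/-- the action `e0^c` on `(x0,...,x5)` -/
def e0act (c : ℝ) (x : Fin 6 → ℝ) : Fin 6 → ℝ :=
  let x0 := x 0; let x1 := x 1; let x2 := x 2; let x3 := x 3; let x4 := x 4; let x5 := x 5
  let D := c^2*x0^2*x2^3*x3 + x1*x2^3*x3^2*x5
    + c*x0*(x1*x3^3 + 3*x1*x2*x3^2*x4 + 3*x1*x2^2*x3*x4^2 + x2^3*(x3^2 + x1*x4^3 + x1*x3*x5))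
  let E := x0^2*x2^3*x3 + x1*x2^3*x3^2*x5
    + x0*(x1*x3^3 + 3*x1*x2*x3^2*x4 + 3*x1*x2^2*x3*x4^2 + x2^3*(x3^2 + x1*x4^3 + x1*x3*x5))
  let F := c*x0^2*x2^3*x3 + x1*x2^3*x3^2*x5
    + x0*(c*x1*x3^3 + 3*c*x1*x2*x3^2*x4 + 3*c*x1*x2^2*x3*x4^2
        + x2^3*(x3^2 + c*x1*x4^3 + c*x1*x3*x5))
  let G := c*x0^2*x2^3*x3 + x1*x2^3*x3^2*x5
    + x0*(x1*x3^3 + (2+c)*x1*x2*x3^2*x4 + (1+2*c)*x1*x2^2*x3*x4^2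
        + x2^3*(x3^2 + c*x1*x4^3 + c*x1*x3*x5))
  let H := c*x0^2*x2^3*x3 + x1*x2^3*x3^2*x5
    + x0*(x1*x3^3 + 3*x1*x2*x3^2*x4 + 3*x1*x2^2*x3*x4^2 + x2^3*(x3^2 + x1*x4^3 + c*x1*x3*x5))
  ![D/(c*E)*x0, F/(c*E)*x1, G/(c*E)*x2, D*H/(c^2*E*F)*x3, D/(c*G)*x4, D/(c*H)*x5]

end

noncomputable section

namespace VermaRelation

/-- First monomial in the numerators of `e1act`, after clearing denominators. -/
def mon1 (x : Fin 6 → ℝ) : ℝ := x 1 * x 3 ^ 2 * x 5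

/-- Second monomial in the numerators of `e1act`, after clearing denominators. -/
def mon2 (x : Fin 6 → ℝ) : ℝ := x 2 ^ 3 * x 3 * x 5

/-- Third monomial in the numerators of `e1act`, after clearing denominators. -/
def mon3 (x : Fin 6 → ℝ) : ℝ := x 2 ^ 3 * x 4 ^ 3

def polyA (x : Fin 6 → ℝ) : ℝ := mon1 x + mon2 x + mon3 x

def polyB₁ (c : ℝ) (x : Fin 6 → ℝ) : ℝ := c * mon1 x + mon2 x + mon3 x

def polyB₃ (c : ℝ) (x : Fin 6 → ℝ) : ℝ := c * mon1 x + c * mon2 x + mon3 x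

def polyD (c : ℝ) (x : Fin 6 → ℝ) : ℝ :=
  c^2*x 0^2*x 2^3*x 3 + x 1*x 2^3*x 3^2*x 5
    + c*x 0*(x 1*x 3^3 + 3*x 1*x 2*x 3^2*x 4 + 3*x 1*x 2^2*x 3*x 4^2
      + x 2^3*(x 3^2 + x 1*x 4^3 + x 1*x 3*x 5))

def polyE (x : Fin 6 → ℝ) : ℝ :=
  x 0^2*x 2^3*x 3 + x 1*x 2^3*x 3^2*x 5
    + x 0*(x 1*x 3^3 + 3*x 1*x 2*x 3^2*x 4 + 3*x 1*x 2^2*x 3*x 4^2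
      + x 2^3*(x 3^2 + x 1*x 4^3 + x 1*x 3*x 5))

def polyF (c : ℝ) (x : Fin 6 → ℝ) : ℝ :=
  c*x 0^2*x 2^3*x 3 + x 1*x 2^3*x 3^2*x 5
    + x 0*(c*x 1*x 3^3 + 3*c*x 1*x 2*x 3^2*x 4 + 3*c*x 1*x 2^2*x 3*x 4^2
      + x 2^3*(x 3^2 + c*x 1*x 4^3 + c*x 1*x 3*x 5))

def polyG (c : ℝ) (x : Fin 6 → ℝ) : ℝ :=
  c*x 0^2*x 2^3*x 3 + x 1*x 2^3*x 3^2*x 5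
    + x 0*(x 1*x 3^3 + (2+c)*x 1*x 2*x 3^2*x 4 + (1+2*c)*x 1*x 2^2*x 3*x 4^2
      + x 2^3*(x 3^2 + c*x 1*x 4^3 + c*x 1*x 3*x 5))

def polyH (c : ℝ) (x : Fin 6 → ℝ) : ℝ :=
  c*x 0^2*x 2^3*x 3 + x 1*x 2^3*x 3^2*x 5
    + x 0*(x 1*x 3^3 + 3*x 1*x 2*x 3^2*x 4 + 3*x 1*x 2^2*x 3*x 4^2
      + x 2^3*(x 3^2 + x 1*x 4^3 + c*x 1*x 3*x 5))

/-- Together with `polyK₁`, a splitting of the product `polyE x * polyA x`. -/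
def polyK₀ (x : Fin 6 → ℝ) : ℝ :=
  x 0*x 2^6*x 3^3*x 5 + 2*x 0*x 1*x 2^3*x 3^4*x 5 + x 0*x 1^2*x 3^5*x 5
    + 3*x 0*x 1*x 2^4*x 3^3*x 4*x 5 + 3*x 0*x 1^2*x 2*x 3^4*x 4*x 5
    + 3*x 0*x 1^2*x 2^2*x 3^3*x 4^2*x 5 + x 0*x 1^2*x 2^3*x 3^2*x 4^3*x 5
    + x 1*x 2^6*x 3^2*x 4^3*x 5 + x 0*x 1^2*x 2^3*x 3^3*x 5^2
    + x 1*x 2^6*x 3^3*x 5^2 + x 1^2*x 2^3*x 3^4*x 5^2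

def polyK₁ (x : Fin 6 → ℝ) : ℝ :=
  x 0^2*x 2^6*x 3*x 4^3 + x 0*x 2^6*x 3^2*x 4^3 + x 0*x 1*x 2^3*x 3^3*x 4^3
    + 3*x 0*x 1*x 2^4*x 3^2*x 4^4 + 3*x 0*x 1*x 2^5*x 3*x 4^5 + x 0*x 1*x 2^6*x 4^6
    + x 0^2*x 2^6*x 3^2*x 5 + x 0^2*x 1*x 2^3*x 3^3*x 5
    + 3*x 0*x 1*x 2^5*x 3^2*x 4^2*x 5 + 2*x 0*x 1*x 2^6*x 3*x 4^3*x 5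
    + x 0*x 1*x 2^6*x 3^2*x 5^2

/-- The factor of `polyA (e0act k x)` that is not a factor of the denominators of `e0act k x`. -/
def polyK (k : ℝ) (x : Fin 6 → ℝ) : ℝ := polyK₀ x + k * polyK₁ x

/-- The numerator of `polyB₁ t (e0act k x)`. -/
def polyU (t k : ℝ) (x : Fin 6 → ℝ) : ℝ :=
  polyF k x * polyK k x + (t - 1) * (polyD k x * polyE x * mon1 x)

/-- The numerator of `polyB₃ t (e0act k x)`. -/
def polyV (t k : ℝ) (x : Fin 6 → ℝ) : ℝ :=
  t * (polyH k x * polyK k x) - (t - 1) * (polyD k x * polyE x * mon3 x)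

/-- The numerator of `polyE (e1act c x)`. -/
def polyE' (c : ℝ) (x : Fin 6 → ℝ) : ℝ := c * polyK₀ x + polyK₁ x

/-- The numerator of `polyD (c * k) (e1act c x)`. -/
def polyD' (c k : ℝ) (x : Fin 6 → ℝ) : ℝ :=
  k * polyE' c x
    + (c * k - 1) * ((k * (x 0^2*x 2^3*x 3) - x 1*x 2^3*x 3^2*x 5) * polyA x)

/-- The numerator of `polyF (c * k) (e1act c x)`. -/
def polyF' (c k : ℝ) (x : Fin 6 → ℝ) : ℝ :=
  c * k * (polyB₁ c x * polyE' c x)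
    + (1 - c * k) * (polyA x * (c * polyB₁ c x * (x 1*x 2^3*x 3^2*x 5)
      + polyB₃ c x * (x 0*x 2^3*x 3^2)))

/-- The numerator of `polyG (c * k) (e1act c x)`. -/
def polyG' (c k : ℝ) (x : Fin 6 → ℝ) : ℝ :=
  polyE' c x + (c * k - 1) * (x 0^2*x 2^6*x 3*x 4^3 + x 0*x 1*x 2^4*x 3^2*x 4^4
    + 2*x 0*x 1*x 2^5*x 3*x 4^5 + x 0*x 1*x 2^6*x 4^6 + x 0^2*x 2^6*x 3^2*x 5
    + x 0^2*x 1*x 2^3*x 3^3*x 5 + 2*x 0*x 1*x 2^5*x 3^2*x 4^2*x 5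
    + 2*x 0*x 1*x 2^6*x 3*x 4^3*x 5 + x 0*x 1*x 2^6*x 3^2*x 5^2
    + c * (x 0*x 1*x 2^4*x 3^3*x 4*x 5 + x 0*x 1^2*x 2*x 3^4*x 4*x 5
      + 2*x 0*x 1^2*x 2^2*x 3^3*x 4^2*x 5 + x 0*x 1^2*x 2^3*x 3^2*x 4^3*x 5
      + x 0*x 1^2*x 2^3*x 3^3*x 5^2))

/-- The numerator of `polyH (c * k) (e1act c x)`. -/
def polyH' (c k : ℝ) (x : Fin 6 → ℝ) : ℝ :=
  polyB₃ c x * polyE' c x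
    + (c * k - 1) * (polyA x * (polyB₃ c x * (x 0^2*x 2^3*x 3)
      + c * polyB₁ c x * (x 0*x 1*x 2^3*x 3*x 5)))

/-- The cofactor of `polyD k x` in
`polyV (c * k) k x * x 0 + c * polyU (c * k) k x * (x 1 * x 5)`. -/
def polyL (c k : ℝ) (x : Fin 6 → ℝ) : ℝ :=
  c * (polyK k x * (x 0 + x 1*x 5))
    + (c * k - 1) * (polyE x * (c * (mon1 x * (x 1*x 5)) - mon3 x * x 0))

/-- The cofactor of `polyG k x` in `polyV (c * k) k x * x 3 + polyU (c * k) k x * (x 2 * x 4)`. -/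
def polyP (c k : ℝ) (x : Fin 6 → ℝ) : ℝ :=
  k * polyE' c x * (x 3 + x 2*x 4)
    + (c * k - 1) * (x 2^3*x 3^2*x 5 * (k * x 0 - x 2*x 4)
      * (x 0*x 2^3*x 3 + x 0*x 1*x 3*(x 3 + x 2*x 4) + x 1*x 2^2*x 4^2*(x 3 + x 2*x 4)
        + x 1*x 2^3*x 3*x 5))

/-- The numerator of `polyF c (e1act (c * k) (e0act k x))`. -/
def polyQ₁ (c k : ℝ) (x : Fin 6 → ℝ) : ℝ :=
  c * polyK k x * (k * polyE' c x
      + (1 - c * k) * (polyA x * (x 1*x 2^3*x 3^2*x 5 + x 0*x 2^3*x 3^2)))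
    + (c * k - 1) * (c * (polyD k x * polyE' c x * mon1 x)
      + (1 - c) * (polyK k x * (c * mon1 x * (x 1*x 2^3*x 3^2*x 5)
        - mon3 x * (x 0*x 2^3*x 3^2))))

/-- The numerator of `polyH c (e1act (c * k) (e0act k x))`. -/
def polyQ₂ (c k : ℝ) (x : Fin 6 → ℝ) : ℝ :=
  c * k * polyK k x * (polyE' c x
      + (c * k - 1) * (polyA x * (x 0^2*x 2^3*x 3 + x 0*x 1*x 2^3*x 3*x 5)))
    + (c * k - 1) * ((c - 1) * k * (polyK k x * (c * mon1 x * (x 0*x 1*x 2^3*x 3*x 5)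
        - mon3 x * (x 0^2*x 2^3*x 3))) - polyD k x * polyE' c x * mon3 x)

variable (c k : ℝ) (x : Fin 6 → ℝ)

theorem polyK₀_add_polyK₁ : polyK₀ x + polyK₁ x = polyE x * polyA x := by
  simp only [polyK₀, polyK₁, polyE, polyA, mon1, mon2, mon3]
  ring

theorem polyD_eq : polyD k x
    = k * polyE x + (k - 1) * (k * (x 0^2*x 2^3*x 3) - x 1*x 2^3*x 3^2*x 5) := by
  simp only [polyD, polyE]
  ring

theorem polyF_eq : polyF k x
    = k * polyE x + (1 - k) * (x 1*x 2^3*x 3^2*x 5 + x 0*x 2^3*x 3^2) := by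
  simp only [polyF, polyE]
  ring

theorem polyH_eq : polyH k x
    = polyE x + (k - 1) * (x 0^2*x 2^3*x 3 + x 0*x 1*x 2^3*x 3*x 5) := by
  simp only [polyH, polyE]
  ring

theorem polyG_eq : polyG k x
    = polyH k x + (k - 1) * (x 0*x 1*x 2*x 4*(x 3 + x 2*x 4)^2) := by
  simp only [polyG, polyH]
  ring

theorem polyE_mul_polyD' :
    polyE x * polyD' c k x = polyD k x * polyE' c x
      + (c - 1) * (k * (x 0^2*x 2^3*x 3) - x 1*x 2^3*x 3^2*x 5) * polyK k x := by
  simp only [polyD', polyD_eq, polyK, polyE']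
  linear_combination -(c * k - 1) * (k * (x 0^2*x 2^3*x 3) - x 1*x 2^3*x 3^2*x 5)
    * polyK₀_add_polyK₁ x

theorem polyE_mul_polyQ₁ :
    polyE x * polyQ₁ c k x
      = c * polyU (c * k) k x * polyE' c x + (1 - c) * (polyK k x * (x 2^3*x 3^2) * polyL c k x) := by
  simp only [polyQ₁, polyU, polyL, polyF_eq, polyK, polyE']
  linear_combination (c * k - 1) * c * (x 1*x 2^3*x 3^2*x 5 + x 0*x 2^3*x 3^2)
    * (polyK₀ x + k * polyK₁ x) * polyK₀_add_polyK₁ x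

theorem polyE_mul_polyQ₂ :
    polyE x * polyQ₂ c k x
      = polyV (c * k) k x * polyE' c x
        + (c - 1) * (k * polyK k x * (x 0*x 2^3*x 3) * polyL c k x) := by
  simp only [polyQ₂, polyV, polyL, polyH_eq, polyK, polyE']
  linear_combination -(c * k - 1) * c * k * (x 0^2*x 2^3*x 3 + x 0*x 1*x 2^3*x 3*x 5)
    * (polyK₀ x + k * polyK₁ x) * polyK₀_add_polyK₁ x

theorem polyA_mul_polyQ₁ :
    polyA x * polyQ₁ c k x = polyF' c k x * polyK k x
      + (k - 1) * (c * (polyD' c k x * polyE' c x * mon1 x)) := by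
  have h₁ : polyB₁ c x = polyA x + (c - 1) * mon1 x := by simp only [polyB₁, polyA]; ring
  have h₃ : polyB₃ c x = c * polyA x - (c - 1) * mon3 x := by simp only [polyB₃, polyA]; ring
  simp only [polyQ₁, polyF', polyD', polyD_eq, polyK, polyE', h₁, h₃]
  linear_combination -(c * k - 1) * c * k * mon1 x * (c * polyK₀ x + polyK₁ x)
    * polyK₀_add_polyK₁ x

theorem polyA_mul_polyQ₂ :
    polyA x * polyQ₂ c k x = k * (polyH' c k x * polyK k x)
      - (k - 1) * (polyD' c k x * polyE' c x * mon3 x) := by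
  have h₁ : polyB₁ c x = polyA x + (c - 1) * mon1 x := by simp only [polyB₁, polyA]; ring
  have h₃ : polyB₃ c x = c * polyA x - (c - 1) * mon3 x := by simp only [polyB₃, polyA]; ring
  simp only [polyQ₂, polyH', polyD', polyD_eq, polyK, polyE', h₁, h₃]
  linear_combination (c * k - 1) * k * mon3 x * (c * polyK₀ x + polyK₁ x)
    * polyK₀_add_polyK₁ x

theorem polyD_mul_polyL :
    polyD k x * polyL c k x = polyV (c * k) k x * x 0 + c * polyU (c * k) k x * (x 1*x 5) := by
  have h : polyD k x * (x 0 + x 1*x 5) = k * polyH k x * x 0 + polyF k x * (x 1*x 5) := by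
    simp only [polyD, polyH, polyF]
    ring
  simp only [polyL, polyV, polyU]
  linear_combination c * polyK k x * h

theorem polyG_mul_polyP :
    polyG k x * polyP c k x = polyV (c * k) k x * x 3 + polyU (c * k) k x * (x 2*x 4) := by
  simp only [polyG, polyP, polyV, polyU, polyD, polyE, polyF, polyH, polyK, polyE', polyK₀, polyK₁,
    mon1, mon3]
  ring

theorem numerator_polyA_e0act :
    polyD k x * polyE x * polyH k x * mon1 x + polyG k x ^ 3 * mon2 x
      + polyD k x * polyE x * polyF k x * mon3 x = polyF k x * polyH k x * polyK k x := by
  simp only [polyG, polyD, polyE, polyF, polyH, polyK, polyK₀, polyK₁, mon1, mon2, mon3]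
  ring

theorem numerator_polyE_e1act :
    polyA x * (polyB₁ c x * polyB₃ c x * (x 0^2*x 2^3*x 3)
        + c * polyB₁ c x * polyB₃ c x * (x 1*x 2^3*x 3^2*x 5)
        + polyB₃ c x ^ 2 * (x 0*x 2^3*x 3^2) + c * polyB₁ c x ^ 2 * (x 0*x 1*x 2^3*x 3*x 5))
      + x 0*x 1*(polyB₃ c x * x 3 + polyB₁ c x * (x 2*x 4))^3
      = polyB₁ c x * polyB₃ c x * polyE' c x := by
  simp only [polyA, polyB₁, polyB₃, polyE', polyK₀, polyK₁, mon1, mon2, mon3]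
  ring

theorem polyB₃_mul_polyG' :
    polyB₃ c x * polyG' c k x = polyH' c k x
      + (c * k - 1) * (x 0*x 1*x 2*x 4*(polyB₃ c x * x 3 + polyB₁ c x * (x 2*x 4))^2) := by
  simp only [polyG', polyH', polyA, polyB₁, polyB₃, polyE', polyK₀, polyK₁, mon1, mon2, mon3]
  ring

set_option maxRecDepth 100000 in
set_option maxHeartbeats 0 in
theorem polyV_mul_polyG' :
    polyV (c * k) k x * polyG' c k x = polyG k x * polyQ₂ c k x
      + (c - 1) * (x 0*x 1*x 2*x 4*polyP c k x^2) := by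
  simp only [polyG', polyA, polyE', polyK₀, polyK₁, mon1, mon2, mon3,
    polyV, polyG, polyQ₂, polyP, polyD, polyE, polyH, polyK]
  ring

set_option maxRecDepth 100000 in
set_option maxHeartbeats 0 in
theorem polyG_mul_polyQ₁ :
    polyG k x * polyQ₁ c k x = polyU (c * k) k x * polyG' c k x
      + (c - 1) * (x 0*x 1*x 3*polyP c k x^2) := by
  simp only [polyG', polyA, polyE', polyK₀, polyK₁, mon1, mon2, mon3,
    polyU, polyG, polyQ₁, polyP, polyD, polyE, polyF, polyK]
  ring

theorem numerator_polyE_e1act_e0act (hc : c ≠ 1) (hG : polyG k x ≠ 0) :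
    polyK k x * (x 2^3*x 3) * polyL c k x
        * (k * polyU (c * k) k x * x 0 + polyV (c * k) k x * x 3)
      + polyE x * (x 0*x 1) * polyP c k x ^ 3
      = polyU (c * k) k x * polyV (c * k) k x * polyE' c x := by
  have hc' : c - 1 ≠ 0 := sub_ne_zero.mpr hc
  refine mul_left_cancel₀ (mul_ne_zero hc' hG) ?_
  linear_combination -polyG k x * polyU (c * k) k x * polyE_mul_polyQ₂ c k x
    + polyG k x * polyV (c * k) k x * polyE_mul_polyQ₁ c k x
    - polyE x * polyU (c * k) k x * polyV_mul_polyG' c k x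
    - polyE x * polyV (c * k) k x * polyG_mul_polyQ₁ c k x
    + polyE x * (c - 1) * (x 0*x 1) * polyP c k x ^ 2 * polyG_mul_polyP c k x

/-- The common shape of `e1act c x` and of `e1act (c * k) (e0act k x)`. -/
def twist (c k D E G K U V : ℝ) (x : Fin 6 → ℝ) : Fin 6 → ℝ :=
  ![D / (k * E) * x 0, U / (k * E * K) * x 1, G / (k * E) * x 2, V * D / (k ^ 2 * E * U) * x 3,
    D / (k * G) * x 4, c * D * K / V * x 5]

section twist

variable {c k D E G K U V : ℝ} {x y : Fin 6 → ℝ}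

theorem polyE_twist (hk : k ≠ 0) (hE : E ≠ 0) (hG : G ≠ 0) (hK : K ≠ 0) (hU : U ≠ 0) (hV : V ≠ 0)
    (hy : y = twist c k D E G K U V x) :
    polyE y = D ^ 3 / (k ^ 8 * E ^ 6 * U ^ 2 * K) *
      (K * G ^ 3 * ((x 2^3*x 3) * (V * x 0 + c * U * (x 1*x 5)) * (k * U * x 0 + V * x 3))
        + D * E * (x 0*x 1*(V * x 3 + U * (x 2*x 4))^3)) := by
  subst hy
  simp [polyE, twist]
  field_simp
  ring

theorem polyD_twist (hk : k ≠ 0) (hE : E ≠ 0) (hK : K ≠ 0) (hU : U ≠ 0) (hV : V ≠ 0)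
    (hy : y = twist c k D E G K U V x) (s : ℝ) :
    polyD s y = s * polyE y + (s - 1) * (D ^ 3 / (k ^ 8 * E ^ 6 * U ^ 2 * K) *
      (K * G ^ 3 * U * V * (s * k * (x 0^2*x 2^3*x 3) - c * (x 1*x 2^3*x 3^2*x 5)))) := by
  rw [polyD_eq]
  subst hy
  congr 2
  simp [twist]
  field_simp

theorem polyF_twist (hk : k ≠ 0) (hE : E ≠ 0) (hK : K ≠ 0) (hU : U ≠ 0) (hV : V ≠ 0)
    (hy : y = twist c k D E G K U V x) (s : ℝ) :
    polyF s y = s * polyE y + (1 - s) * (D ^ 3 / (k ^ 8 * E ^ 6 * U ^ 2 * K) *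
      (K * G ^ 3 * V * ((x 2^3*x 3^2) * (V * x 0 + c * U * (x 1*x 5))))) := by
  rw [polyF_eq]
  subst hy
  congr 2
  simp [twist]
  field_simp
  ring

theorem polyH_twist (hk : k ≠ 0) (hE : E ≠ 0) (hK : K ≠ 0) (hU : U ≠ 0) (hV : V ≠ 0)
    (hy : y = twist c k D E G K U V x) (s : ℝ) :
    polyH s y = polyE y + (s - 1) * (D ^ 3 / (k ^ 8 * E ^ 6 * U ^ 2 * K) *
      (K * G ^ 3 * U * k * ((x 0*x 2^3*x 3) * (V * x 0 + c * U * (x 1*x 5))))) := by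
  rw [polyH_eq]
  subst hy
  congr 2
  simp [twist]
  field_simp

theorem polyG_twist (hk : k ≠ 0) (hE : E ≠ 0) (hG : G ≠ 0) (hK : K ≠ 0) (hU : U ≠ 0)
    (hy : y = twist c k D E G K U V x) (s : ℝ) :
    polyG s y = polyH s y + (s - 1) * (D ^ 3 / (k ^ 8 * E ^ 6 * U ^ 2 * K) *
      (D * E * U * (x 0*x 1*x 2*x 4*(V * x 3 + U * (x 2*x 4))^2))) := by
  rw [polyG_eq]
  subst hy
  congr 2
  simp [twist]
  field_simp

end twist

theorem e0act_eq : e0act k x = ![polyD k x / (k * polyE x) * x 0, polyF k x / (k * polyE x) * x 1,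
    polyG k x / (k * polyE x) * x 2, polyD k x * polyH k x / (k ^ 2 * polyE x * polyF k x) * x 3,
    polyD k x / (k * polyG k x) * x 4, polyD k x / (k * polyH k x) * x 5] :=
  rfl

section positivity

variable {c k : ℝ} {x : Fin 6 → ℝ}

theorem polyA_pos (hx : ∀ i, 0 < x i) : 0 < polyA x := by
  have h0 := hx 0; have h1 := hx 1; have h2 := hx 2
  have h3 := hx 3; have h4 := hx 4; have h5 := hx 5
  simp only [polyA, mon1, mon2, mon3]; positivity

theorem polyB₁_pos (hc : 0 < c) (hx : ∀ i, 0 < x i) : 0 < polyB₁ c x := by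
  have h0 := hx 0; have h1 := hx 1; have h2 := hx 2
  have h3 := hx 3; have h4 := hx 4; have h5 := hx 5
  simp only [polyB₁, mon1, mon2, mon3]; positivity

theorem polyB₃_pos (hc : 0 < c) (hx : ∀ i, 0 < x i) : 0 < polyB₃ c x := by
  have h0 := hx 0; have h1 := hx 1; have h2 := hx 2
  have h3 := hx 3; have h4 := hx 4; have h5 := hx 5
  simp only [polyB₃, mon1, mon2, mon3]; positivity

theorem polyD_pos (hk : 0 < k) (hx : ∀ i, 0 < x i) : 0 < polyD k x := by
  have h0 := hx 0; have h1 := hx 1; have h2 := hx 2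
  have h3 := hx 3; have h4 := hx 4; have h5 := hx 5
  simp only [polyD]; positivity

theorem polyE_pos (hx : ∀ i, 0 < x i) : 0 < polyE x := by
  have h0 := hx 0; have h1 := hx 1; have h2 := hx 2
  have h3 := hx 3; have h4 := hx 4; have h5 := hx 5
  simp only [polyE]; positivity

theorem polyF_pos (hk : 0 < k) (hx : ∀ i, 0 < x i) : 0 < polyF k x := by
  have h0 := hx 0; have h1 := hx 1; have h2 := hx 2
  have h3 := hx 3; have h4 := hx 4; have h5 := hx 5
  simp only [polyF]; positivity

theorem polyG_pos (hk : 0 < k) (hx : ∀ i, 0 < x i) : 0 < polyG k x := by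
  have h0 := hx 0; have h1 := hx 1; have h2 := hx 2
  have h3 := hx 3; have h4 := hx 4; have h5 := hx 5
  simp only [polyG]; positivity

theorem polyH_pos (hk : 0 < k) (hx : ∀ i, 0 < x i) : 0 < polyH k x := by
  have h0 := hx 0; have h1 := hx 1; have h2 := hx 2
  have h3 := hx 3; have h4 := hx 4; have h5 := hx 5
  simp only [polyH]; positivity

theorem polyK_pos (hk : 0 < k) (hx : ∀ i, 0 < x i) : 0 < polyK k x := by
  have h0 := hx 0; have h1 := hx 1; have h2 := hx 2
  have h3 := hx 3; have h4 := hx 4; have h5 := hx 5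
  simp only [polyK, polyK₀, polyK₁]; positivity

theorem e0act_pos (hk : 0 < k) (hx : ∀ i, 0 < x i) (i : Fin 6) : 0 < e0act k x i := by
  have hD := polyD_pos hk hx
  have hE := polyE_pos hx
  have hF := polyF_pos hk hx
  have hG := polyG_pos hk hx
  have hH := polyH_pos hk hx
  have h0 := hx 0; have h1 := hx 1; have h2 := hx 2
  have h3 := hx 3; have h4 := hx 4; have h5 := hx 5
  rw [e0act_eq]
  fin_cases i <;> simp <;> positivity

theorem e1act_eq (hc : 0 < c) (hx : ∀ i, 0 < x i) :
    e1act c x = ![x 0, polyB₁ c x / polyA x * x 1, x 2, polyB₃ c x / polyB₁ c x * x 3, x 4,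
      c * polyA x / polyB₃ c x * x 5] := by
  have h0 := hx 0; have h1 := hx 1; have h2 := hx 2
  have h3 := hx 3; have h4 := hx 4; have h5 := hx 5
  have hm : x 0 / (x 1^2*x 3^2*x 5) ≠ 0 := by positivity
  have hA : x 0/x 1 + x 0*x 2^3/(x 1^2*x 3) + x 0*x 2^3*x 4^3/(x 1^2*x 3^2*x 5)
      = x 0 / (x 1^2*x 3^2*x 5) * polyA x := by
    simp only [polyA, mon1, mon2, mon3]; field_simp
  have hB₁ : c*x 0/x 1 + x 0*x 2^3/(x 1^2*x 3) + x 0*x 2^3*x 4^3/(x 1^2*x 3^2*x 5)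
      = x 0 / (x 1^2*x 3^2*x 5) * polyB₁ c x := by
    simp only [polyB₁, mon1, mon2, mon3]; field_simp
  have hB₃ : c*x 0/x 1 + c*x 0*x 2^3/(x 1^2*x 3) + x 0*x 2^3*x 4^3/(x 1^2*x 3^2*x 5)
      = x 0 / (x 1^2*x 3^2*x 5) * polyB₃ c x := by
    simp only [polyB₃, mon1, mon2, mon3]; field_simp
  simp only [e1act, hA, hB₁, hB₃, mul_left_comm c, mul_div_mul_left _ _ hm]

theorem e1act_pos (hc : 0 < c) (hx : ∀ i, 0 < x i) (i : Fin 6) : 0 < e1act c x i := by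
  have hA := polyA_pos hx
  have hB₁ := polyB₁_pos hc hx
  have hB₃ := polyB₃_pos hc hx
  have h0 := hx 0; have h1 := hx 1; have h2 := hx 2
  have h3 := hx 3; have h4 := hx 4; have h5 := hx 5
  rw [e1act_eq hc hx]
  fin_cases i <;> simp <;> positivity

end positivity

section e1act

variable {c k : ℝ} {x : Fin 6 → ℝ}

theorem e1act_eq_twist (hc : 0 < c) (hx : ∀ i, 0 < x i) :
    e1act c x = twist c 1 1 1 1 (polyA x) (polyB₁ c x) (polyB₃ c x) x := by
  rw [e1act_eq hc hx, twist]
  simp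

/-- The positive scalar relating the polynomials of `e0act` at `e1act c x` to their numerators. -/
def e1Scale (c : ℝ) (x : Fin 6 → ℝ) : ℝ := (polyB₁ c x ^ 2 * polyA x)⁻¹

theorem polyE_e1act (hc : 0 < c) (hx : ∀ i, 0 < x i) :
    polyE (e1act c x) = e1Scale c x * (polyB₁ c x * polyB₃ c x * polyE' c x) := by
  rw [polyE_twist one_ne_zero one_ne_zero one_ne_zero (polyA_pos hx).ne' (polyB₁_pos hc hx).ne'
    (polyB₃_pos hc hx).ne' (e1act_eq_twist hc hx), e1Scale]
  linear_combination (polyB₁ c x ^ 2 * polyA x)⁻¹ * numerator_polyE_e1act c x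

theorem polyD_e1act (hc : 0 < c) (hx : ∀ i, 0 < x i) :
    polyD (c * k) (e1act c x) = e1Scale c x * (c * polyB₁ c x * polyB₃ c x * polyD' c k x) := by
  rw [polyD_twist one_ne_zero one_ne_zero (polyA_pos hx).ne' (polyB₁_pos hc hx).ne'
    (polyB₃_pos hc hx).ne' (e1act_eq_twist hc hx), polyE_e1act hc hx, e1Scale, polyD']
  ring

theorem polyF_e1act (hc : 0 < c) (hx : ∀ i, 0 < x i) :
    polyF (c * k) (e1act c x) = e1Scale c x * (polyB₃ c x * polyF' c k x) := by
  rw [polyF_twist one_ne_zero one_ne_zero (polyA_pos hx).ne' (polyB₁_pos hc hx).ne'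
    (polyB₃_pos hc hx).ne' (e1act_eq_twist hc hx), polyE_e1act hc hx, e1Scale, polyF']
  ring

theorem polyH_e1act (hc : 0 < c) (hx : ∀ i, 0 < x i) :
    polyH (c * k) (e1act c x) = e1Scale c x * (polyB₁ c x * polyH' c k x) := by
  rw [polyH_twist one_ne_zero one_ne_zero (polyA_pos hx).ne' (polyB₁_pos hc hx).ne'
    (polyB₃_pos hc hx).ne' (e1act_eq_twist hc hx), polyE_e1act hc hx, e1Scale, polyH']
  ring

theorem polyG_e1act (hc : 0 < c) (hx : ∀ i, 0 < x i) :
    polyG (c * k) (e1act c x) = e1Scale c x * (polyB₁ c x * polyB₃ c x * polyG' c k x) := by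
  rw [polyG_twist one_ne_zero one_ne_zero one_ne_zero (polyA_pos hx).ne' (polyB₁_pos hc hx).ne'
    (e1act_eq_twist hc hx), polyH_e1act hc hx, e1Scale]
  linear_combination -(polyB₁ c x ^ 2 * polyA x)⁻¹ * polyB₁ c x * polyB₃_mul_polyG' c k x

theorem polyK_e1act (hc : 0 < c) (hx : ∀ i, 0 < x i) :
    polyK (c * k) (e1act c x) = e1Scale c x * (c * polyB₁ c x * polyB₃ c x ^ 2 * polyK k x) := by
  have hA := (polyA_pos hx).ne'
  have hB₁ := (polyB₁_pos hc hx).ne'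
  have hB₃ := (polyB₃_pos hc hx).ne'
  rw [e1act_eq hc hx, e1Scale]
  simp [polyK, polyK₀, polyK₁]
  field_simp
  simp only [polyA, polyB₁, polyB₃, mon1, mon2, mon3]
  ring

theorem mon1_e1act (hc : 0 < c) (hx : ∀ i, 0 < x i) :
    mon1 (e1act c x) = c * polyB₃ c x / polyB₁ c x * mon1 x := by
  have hA := (polyA_pos hx).ne'
  have hB₁ := (polyB₁_pos hc hx).ne'
  have hB₃ := (polyB₃_pos hc hx).ne'
  rw [e1act_eq hc hx]
  simp [mon1]
  field_simp

theorem mon3_e1act (hc : 0 < c) (hx : ∀ i, 0 < x i) : mon3 (e1act c x) = mon3 x := by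
  rw [e1act_eq hc hx]
  simp [mon3]

theorem polyU_e1act (hc : 0 < c) (hx : ∀ i, 0 < x i) :
    polyU k (c * k) (e1act c x)
      = e1Scale c x ^ 2 * (c * polyB₁ c x * polyB₃ c x ^ 3 * polyA x * polyQ₁ c k x) := by
  have hB₁ := (polyB₁_pos hc hx).ne'
  rw [polyU, polyF_e1act hc hx, polyK_e1act hc hx, polyD_e1act hc hx, polyE_e1act hc hx,
    mon1_e1act hc hx, mul_assoc _ (polyA x), polyA_mul_polyQ₁]
  field_simp

theorem polyV_e1act (hc : 0 < c) (hx : ∀ i, 0 < x i) :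
    polyV k (c * k) (e1act c x)
      = e1Scale c x ^ 2 * (c * polyB₁ c x ^ 2 * polyB₃ c x ^ 2 * polyA x * polyQ₂ c k x) := by
  rw [polyV, polyH_e1act hc hx, polyK_e1act hc hx, polyD_e1act hc hx, polyE_e1act hc hx,
    mon3_e1act hc hx, mul_assoc _ (polyA x), polyA_mul_polyQ₂]
  ring

end e1act

section e0act

variable {c k t : ℝ} {x : Fin 6 → ℝ}

/-- The positive scalar relating the polynomials of `e1act` at `e0act k x` to their numerators. -/
def e0Scale (k : ℝ) (x : Fin 6 → ℝ) : ℝ := polyD k x ^ 2 / (k ^ 6 * polyE x ^ 4 * polyF k x)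

theorem e0Scale_pos (hk : 0 < k) (hx : ∀ i, 0 < x i) : 0 < e0Scale k x := by
  have hD := polyD_pos hk hx
  have hE := polyE_pos hx
  have hF := polyF_pos hk hx
  unfold e0Scale
  positivity

theorem mon1_e0act (hk : 0 < k) (hx : ∀ i, 0 < x i) :
    mon1 (e0act k x) = e0Scale k x * (polyD k x * polyE x * polyH k x * mon1 x) := by
  have hE := (polyE_pos hx).ne'
  have hF := (polyF_pos hk hx).ne'
  have hH := (polyH_pos hk hx).ne'
  rw [e0act_eq, e0Scale]
  simp [mon1]
  field_simp

theorem mon2_e0act (hk : 0 < k) (hx : ∀ i, 0 < x i) :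
    mon2 (e0act k x) = e0Scale k x * (polyG k x ^ 3 * mon2 x) := by
  have hE := (polyE_pos hx).ne'
  have hF := (polyF_pos hk hx).ne'
  have hH := (polyH_pos hk hx).ne'
  rw [e0act_eq, e0Scale]
  simp [mon2]
  field_simp

theorem mon3_e0act (hk : 0 < k) (hx : ∀ i, 0 < x i) :
    mon3 (e0act k x) = e0Scale k x * (polyD k x * polyE x * polyF k x * mon3 x) := by
  have hE := (polyE_pos hx).ne'
  have hF := (polyF_pos hk hx).ne'
  have hG := (polyG_pos hk hx).ne'
  rw [e0act_eq, e0Scale]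
  simp [mon3]
  field_simp

theorem polyA_e0act (hk : 0 < k) (hx : ∀ i, 0 < x i) :
    polyA (e0act k x) = e0Scale k x * (polyF k x * polyH k x * polyK k x) := by
  rw [polyA, mon1_e0act hk hx, mon2_e0act hk hx, mon3_e0act hk hx]
  linear_combination e0Scale k x * numerator_polyA_e0act k x

theorem polyB₁_e0act (hk : 0 < k) (hx : ∀ i, 0 < x i) :
    polyB₁ t (e0act k x) = e0Scale k x * (polyH k x * polyU t k x) := by
  rw [polyB₁, mon1_e0act hk hx, mon2_e0act hk hx, mon3_e0act hk hx, polyU]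
  linear_combination e0Scale k x * numerator_polyA_e0act k x

theorem polyB₃_e0act (hk : 0 < k) (hx : ∀ i, 0 < x i) :
    polyB₃ t (e0act k x) = e0Scale k x * (polyF k x * polyV t k x) := by
  rw [polyB₃, mon1_e0act hk hx, mon2_e0act hk hx, mon3_e0act hk hx, polyV]
  linear_combination t * e0Scale k x * numerator_polyA_e0act k x

theorem polyU_pos (hk : 0 < k) (ht : 0 < t) (hx : ∀ i, 0 < x i) : 0 < polyU t k x := by
  have h := polyB₁_pos ht (e0act_pos hk hx)
  rw [polyB₁_e0act hk hx] at h
  exact pos_of_mul_pos_right (pos_of_mul_pos_right h (e0Scale_pos hk hx).le) (polyH_pos hk hx).le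

theorem polyV_pos (hk : 0 < k) (ht : 0 < t) (hx : ∀ i, 0 < x i) : 0 < polyV t k x := by
  have h := polyB₃_pos ht (e0act_pos hk hx)
  rw [polyB₃_e0act hk hx] at h
  exact pos_of_mul_pos_right (pos_of_mul_pos_right h (e0Scale_pos hk hx).le) (polyF_pos hk hx).le

theorem e1act_e0act (hk : 0 < k) (ht : 0 < t) (hx : ∀ i, 0 < x i) :
    e1act t (e0act k x) = twist (t / k) k (polyD k x) (polyE x) (polyG k x) (polyK k x)
      (polyU t k x) (polyV t k x) x := by
  have hm := (e0Scale_pos hk hx).ne'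
  have hE := (polyE_pos hx).ne'
  have hF := (polyF_pos hk hx).ne'
  have hH := (polyH_pos hk hx).ne'
  have hK := (polyK_pos hk hx).ne'
  have hU := (polyU_pos hk ht hx).ne'
  have hV := (polyV_pos hk ht hx).ne'
  rw [e1act_eq ht (e0act_pos hk hx), polyA_e0act hk hx, polyB₁_e0act hk hx, polyB₃_e0act hk hx,
    e0act_eq, twist]
  ext i
  fin_cases i <;> simp <;> field_simp

/-- The positive scalar relating the polynomials of `e0act` at `e1act (c * k) (e0act k x)` to
their numerators. -/
def e1e0Scale (c k : ℝ) (x : Fin 6 → ℝ) : ℝ :=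
  polyD k x ^ 4 * polyG k x ^ 3 * polyV (c * k) k x
    / (k ^ 8 * polyE x ^ 5 * polyU (c * k) k x * polyK k x)

theorem e1e0Scale_pos (hc : 0 < c) (hk : 0 < k) (hx : ∀ i, 0 < x i) : 0 < e1e0Scale c k x := by
  have hD := polyD_pos hk hx
  have hE := polyE_pos hx
  have hG := polyG_pos hk hx
  have hK := polyK_pos hk hx
  have hU := polyU_pos hk (mul_pos hc hk) hx
  have hV := polyV_pos hk (mul_pos hc hk) hx
  unfold e1e0Scale
  positivity

theorem e1act_mul_e0act (hc : 0 < c) (hk : 0 < k) (hx : ∀ i, 0 < x i) :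
    e1act (c * k) (e0act k x) = twist c k (polyD k x) (polyE x) (polyG k x) (polyK k x)
      (polyU (c * k) k x) (polyV (c * k) k x) x := by
  rw [e1act_e0act hk (mul_pos hc hk) hx, mul_div_cancel_right₀ c hk.ne']

theorem polyE_e1act_e0act (hc : 0 < c) (hk : 0 < k) (hc1 : c ≠ 1) (hx : ∀ i, 0 < x i) :
    polyE (e1act (c * k) (e0act k x)) = e1e0Scale c k x * (polyE' c x / polyE x) := by
  have hE := (polyE_pos hx).ne'
  have hG := (polyG_pos hk hx).ne'
  have hK := (polyK_pos hk hx).ne'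
  have hU := (polyU_pos hk (mul_pos hc hk) hx).ne'
  have hV := (polyV_pos hk (mul_pos hc hk) hx).ne'
  rw [polyE_twist hk.ne' hE hG hK hU hV (e1act_mul_e0act hc hk hx), ← polyD_mul_polyL,
    ← polyG_mul_polyP, e1e0Scale]
  have key := numerator_polyE_e1act_e0act c k x hc1 hG
  generalize polyU (c * k) k x = U at *
  generalize polyV (c * k) k x = V at *
  field_simp
  linear_combination polyD k x ^ 4 * key

theorem polyD_e1act_e0act (hc : 0 < c) (hk : 0 < k) (hc1 : c ≠ 1) (hx : ∀ i, 0 < x i) :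
    polyD c (e1act (c * k) (e0act k x)) = e1e0Scale c k x * (c * polyD' c k x / polyD k x) := by
  have hD := (polyD_pos hk hx).ne'
  have hE := (polyE_pos hx).ne'
  have hK := (polyK_pos hk hx).ne'
  have hU := (polyU_pos hk (mul_pos hc hk) hx).ne'
  have hV := (polyV_pos hk (mul_pos hc hk) hx).ne'
  rw [polyD_twist hk.ne' hE hK hU hV (e1act_mul_e0act hc hk hx), polyE_e1act_e0act hc hk hc1 hx,
    e1e0Scale]
  field_simp
  linear_combination -polyG k x ^ 3 * polyE_mul_polyD' c k x

theorem polyF_e1act_e0act (hc : 0 < c) (hk : 0 < k) (hc1 : c ≠ 1) (hx : ∀ i, 0 < x i) :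
    polyF c (e1act (c * k) (e0act k x))
      = e1e0Scale c k x * (polyQ₁ c k x / polyU (c * k) k x) := by
  have hE := (polyE_pos hx).ne'
  have hK := (polyK_pos hk hx).ne'
  have hU := (polyU_pos hk (mul_pos hc hk) hx).ne'
  have hV := (polyV_pos hk (mul_pos hc hk) hx).ne'
  rw [polyF_twist hk.ne' hE hK hU hV (e1act_mul_e0act hc hk hx), polyE_e1act_e0act hc hk hc1 hx,
    ← polyD_mul_polyL, e1e0Scale]
  field_simp
  linear_combination -polyD k x ^ 4 * polyG k x ^ 3 * polyE_mul_polyQ₁ c k x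

theorem polyH_e1act_e0act (hc : 0 < c) (hk : 0 < k) (hc1 : c ≠ 1) (hx : ∀ i, 0 < x i) :
    polyH c (e1act (c * k) (e0act k x))
      = e1e0Scale c k x * (polyQ₂ c k x / polyV (c * k) k x) := by
  have hE := (polyE_pos hx).ne'
  have hK := (polyK_pos hk hx).ne'
  have hU := (polyU_pos hk (mul_pos hc hk) hx).ne'
  have hV := (polyV_pos hk (mul_pos hc hk) hx).ne'
  rw [polyH_twist hk.ne' hE hK hU hV (e1act_mul_e0act hc hk hx), polyE_e1act_e0act hc hk hc1 hx,
    ← polyD_mul_polyL, e1e0Scale]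
  field_simp
  linear_combination -polyD k x ^ 4 * polyG k x ^ 3 * polyE_mul_polyQ₂ c k x

theorem polyG_e1act_e0act (hc : 0 < c) (hk : 0 < k) (hc1 : c ≠ 1) (hx : ∀ i, 0 < x i) :
    polyG c (e1act (c * k) (e0act k x))
      = e1e0Scale c k x * (polyG' c k x / polyG k x) := by
  have hE := (polyE_pos hx).ne'
  have hG := (polyG_pos hk hx).ne'
  have hK := (polyK_pos hk hx).ne'
  have hU := (polyU_pos hk (mul_pos hc hk) hx).ne'
  have hV := (polyV_pos hk (mul_pos hc hk) hx).ne'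
  rw [polyG_twist hk.ne' hE hG hK hU (e1act_mul_e0act hc hk hx), polyH_e1act_e0act hc hk hc1 hx,
    ← polyG_mul_polyP, e1e0Scale]
  field_simp
  linear_combination -polyD k x ^ 4 * polyV_mul_polyG' c k x

end e0act

section one

variable {x : Fin 6 → ℝ}

theorem e0act_one (hx : ∀ i, 0 < x i) : e0act 1 x = x := by
  have hE := (polyE_pos hx).ne'
  have hD : polyD 1 x = polyE x := by rw [polyD_eq]; ring
  have hF : polyF 1 x = polyE x := by rw [polyF_eq]; ring
  have hH : polyH 1 x = polyE x := by rw [polyH_eq]; ring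
  have hG : polyG 1 x = polyE x := by rw [polyG_eq, hH]; ring
  rw [e0act_eq, hD, hF, hG, hH]
  ext i
  fin_cases i <;> simp [hE]

theorem e1act_one (hx : ∀ i, 0 < x i) : e1act 1 x = x := by
  have hA := (polyA_pos hx).ne'
  have h₁ : polyB₁ 1 x = polyA x := by simp [polyB₁, polyA]
  have h₃ : polyB₃ 1 x = polyA x := by simp [polyB₃, polyA]
  rw [e1act_eq one_pos hx, h₁, h₃]
  ext i
  fin_cases i <;> simp [hA]

end one

end VermaRelation

end

/-- Verma relation between `e0` and `e1` (case `a01 = a10 = -1`). -/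
theorem verma_e0_e1 (c1 c2 : ℝ) (hc1 : 0 < c1) (hc2 : 0 < c2)
    (x : Fin 6 → ℝ) (hx : ∀ i, 0 < x i) :
    e0act c1 (e1act (c1*c2) (e0act c2 x)) = e1act c2 (e0act (c1*c2) (e1act c1 x)) := by
  open VermaRelation in
  by_cases hc : c1 = 1
  · subst hc
    rw [one_mul, e1act_one hx, e0act_one (e1act_pos hc2 (e0act_pos hc2 hx))]
  have hs := mul_pos hc1 hc2
  have hw := e1act_pos hc1 hx
  have hA := (polyA_pos hx).ne'
  have hB₁ := (polyB₁_pos hc1 hx).ne'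
  have hB₃ := (polyB₃_pos hc1 hx).ne'
  have hD := (polyD_pos hc2 hx).ne'
  have hE := (polyE_pos hx).ne'
  have hG := (polyG_pos hc2 hx).ne'
  have hK := (polyK_pos hc2 hx).ne'
  have hU := (polyU_pos hc2 hs hx).ne'
  have hV := (polyV_pos hc2 hs hx).ne'
  have hm := (e1e0Scale_pos hc1 hc2 hx).ne'
  have hn : e1Scale c1 x ≠ 0 := by
    intro h
    exact (polyE_pos hw).ne' (by rw [polyE_e1act hc1 hx, h, zero_mul])
  have hE' : polyE' c1 x ≠ 0 := by
    intro h
    exact (polyE_pos hw).ne' (by rw [polyE_e1act hc1 hx, h, mul_zero, mul_zero])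
  have hG' : polyG' c1 c2 x ≠ 0 := by
    intro h
    exact (polyG_pos hs hw).ne' (by rw [polyG_e1act hc1 hx, h, mul_zero, mul_zero])
  have hQ₁ : polyQ₁ c1 c2 x ≠ 0 := by
    intro h
    exact (polyU_pos hs hc2 hw).ne' (by rw [polyU_e1act hc1 hx, h, mul_zero, mul_zero])
  have hQ₂ : polyQ₂ c1 c2 x ≠ 0 := by
    intro h
    exact (polyV_pos hs hc2 hw).ne' (by rw [polyV_e1act hc1 hx, h, mul_zero, mul_zero])
  rw [e0act_eq, polyD_e1act_e0act hc1 hc2 hc hx, polyE_e1act_e0act hc1 hc2 hc hx,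
    polyF_e1act_e0act hc1 hc2 hc hx, polyG_e1act_e0act hc1 hc2 hc hx,
    polyH_e1act_e0act hc1 hc2 hc hx, e1act_mul_e0act hc1 hc2 hx,
    e1act_e0act hs hc2 hw, polyD_e1act hc1 hx, polyE_e1act hc1 hx, polyG_e1act hc1 hx,
    polyK_e1act hc1 hx, polyU_e1act hc1 hx, polyV_e1act hc1 hx, e1act_eq hc1 hx]
  ext i
  fin_cases i <;> simp [twist] <;> field_simp
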